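/- arXiv:1207.4819 — 2 statements merged into one kernel-verified Lean document; each statement's English description precedes it below -/
import Mathlib

section
/- Coherence bound on the pairing with the sign matrix: Let c_γ := (c+γ)/γ. For every S ∈ 𝒮_V with support L, every φ ∈ Ψ_{S,W}, every A ∈ 𝒮_V, and every λ > 0: |⟨sign(S), A − S⟩| ≤ m·√(φ(λ))·‖A − S‖_{L₂(Π²)} + m·√(c_γ·φ(λ)/λ)·‖W^{1/2}(A − S)‖_{L₂(Π²)}, where ⟨·,·⟩ is the Hilbert–Schmidt inner product. -/
open MeasureTheory Finset
open scoped ENNReal NNReal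

noncomputable section

/-- Sample space for one observation: a pair of vertices `(X, X')` and a response `Y`. -/
abbrev Obs (m : ℕ) := Fin m × Fin m × ℝ

/-- Squared Hilbert–Schmidt (Frobenius) norm of a kernel. -/
def hsNormSq {m : ℕ} (S : Matrix (Fin m) (Fin m) ℝ) : ℝ := ∑ u, ∑ v, (S u v) ^ 2

/-- Squared `L₂(Π²)` norm: `‖S‖²_{L₂(Π²)} = m⁻² ‖S‖₂²`. -/
def l2PiSq {m : ℕ} (S : Matrix (Fin m) (Fin m) ℝ) : ℝ := hsNormSq S / (m : ℝ) ^ 2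

/-- Squared Sobolev (Hilbert–Schmidt) norm `‖W^{1/2}S‖₂² = ∑ₖ λₖ ‖S φₖ‖²`,
expressed through the eigendata `(lam, φ)` of `W` (indexed by `1,…,m`). -/
def sobolevHSSq {m : ℕ} (lam : ℕ → ℝ) (φ : ℕ → Fin m → ℝ)
    (S : Matrix (Fin m) (Fin m) ℝ) : ℝ :=
  ∑ k ∈ Finset.Icc 1 m, lam k * ∑ u, (S.mulVec (φ k) u) ^ 2

/-- `φ₁,…,φ_m` are orthonormal in `ℝ^V` (Euclidean inner product). -/
def OrthonormalFamily (m : ℕ) (φ : ℕ → Fin m → ℝ) : Prop :=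
  ∀ j ∈ Finset.Icc 1 m, ∀ k ∈ Finset.Icc 1 m,
    (∑ v, φ j v * φ k v) = if j = k then (1 : ℝ) else 0

/-- Eigendata of the positive semidefinite kernel `W`: orthonormal eigenfunctions `φ`,
nonnegative nondecreasing eigenvalues `lam` (indexed by `1,…,m`), `k0` the smallest index
of a positive eigenvalue, and `λ_{k+1} ≤ c·λ_k` for `k ≥ k0`. -/
structure IsEigenData (m : ℕ) (c : ℝ) (lam : ℕ → ℝ) (φ : ℕ → Fin m → ℝ) (k0 : ℕ) : Prop where
  orth : OrthonormalFamily m φ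
  nonneg : ∀ k ∈ Finset.Icc 1 m, 0 ≤ lam k
  mono : ∀ k l : ℕ, 1 ≤ k → k ≤ l → l ≤ m → lam k ≤ lam l
  k0_mem : 1 ≤ k0 ∧ k0 ≤ m ∧ 0 < lam k0
  k0_min : ∀ k ∈ Finset.Icc 1 m, 0 < lam k → k0 ≤ k
  ratio : ∀ k : ℕ, k0 ≤ k → k + 1 ≤ m → lam (k + 1) ≤ c * lam k

/-- The design `(X, X')` is uniformly distributed on `V × V`. -/
def UniformDesign (m : ℕ) (P : Measure (Obs m)) : Prop :=
  ∀ u v : Fin m, P {z : Obs m | z.1 = u ∧ z.2.1 = v} = ((m : ℝ≥0∞) ^ 2)⁻¹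

/-- The regression kernel `S_P(u,v) = m²·E_P[Y·1{X=u, X'=v}] = E_P(Y | X=u, X'=v)`. -/
def regKernel (m : ℕ) (P : Measure (Obs m)) : Matrix (Fin m) (Fin m) ℝ :=
  Matrix.of fun u v =>
    (m : ℝ) ^ 2 * ∫ z : Obs m, (if z.1 = u ∧ z.2.1 = v then z.2.2 else 0) ∂P

/-- Membership in the class `𝒫_{r,ρ,a}` of sampling distributions. -/
def MemP (m : ℕ) (r : ℕ) (ρ a : ℝ) (lam : ℕ → ℝ) (φ : ℕ → Fin m → ℝ)
    (P : Measure (Obs m)) : Prop :=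
  IsProbabilityMeasure P ∧ UniformDesign m P ∧ (∀ᵐ z ∂P, |z.2.2| ≤ a) ∧
    (regKernel m P).IsSymm ∧ (regKernel m P).rank ≤ r ∧
    sobolevHSSq lam φ (regKernel m P) ≤ ρ ^ 2 * (m : ℝ) ^ 2


/-- Squared norm of the orthogonal projection of `x` onto the support (= range, for a
symmetric matrix) of `S`. -/
def projSuppNormSq {m : ℕ} (S : Matrix (Fin m) (Fin m) ℝ) (x : Fin m → ℝ) : ℝ :=
  ‖(Submodule.orthogonalProjection (LinearMap.range (Matrix.toEuclideanLin S))
      ((EuclideanSpace.equiv (Fin m) ℝ).symm x) : EuclideanSpace ℝ (Fin m))‖ ^ 2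

/-- The coherence function `φ(S;t) := ∑_{λ_j ≤ t} ‖P_L φ_j‖²`, `L = supp(S)`. -/
def cohFn {m : ℕ} (lam : ℕ → ℝ) (φ : ℕ → Fin m → ℝ) (S : Matrix (Fin m) (Fin m) ℝ)
    (t : ℝ) : ℝ :=
  ∑ j ∈ (Finset.Icc 1 m).filter fun j => lam j ≤ t, projSuppNormSq S (φ j)

/-- The regularized coherence function
`φ̄(S;t) := sup_{0 < σ ≤ t} F̄(σ)·sup_{σ' ≥ σ} φ(S;σ')/F̄(σ')`. -/
def cohBar {m : ℕ} (lam : ℕ → ℝ) (φ : ℕ → Fin m → ℝ) (Fbar : ℝ → ℝ)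
    (S : Matrix (Fin m) (Fin m) ℝ) (t : ℝ) : ℝ :=
  sSup ((fun σ => Fbar σ *
      sSup ((fun σ' => cohFn lam φ S σ' / Fbar σ') '' Set.Ici σ)) '' Set.Ioc 0 t)

/-- `φ̄(S; ε̄⁻¹)`, with the convention `φ̄(S; +∞) := rank S` when `ε̄ = 0`. -/
def cohBarInv {m : ℕ} (lam : ℕ → ℝ) (φ : ℕ → Fin m → ℝ) (Fbar : ℝ → ℝ)
    (S : Matrix (Fin m) (Fin m) ℝ) (ebar : ℝ) : ℝ :=
  if ebar = 0 then (S.rank : ℝ) else cohBar lam φ Fbar S ebar⁻¹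

/-- The nuclear norm of a symmetric matrix: the sum of absolute values of its
eigenvalues. -/
def nuclearNorm {m : ℕ} (S : Matrix (Fin m) (Fin m) ℝ) : ℝ :=
  if h : S.IsHermitian then ∑ i, |h.eigenvalues i| else 0

/-- The spectral function `F(t) := #{j : λ_j ≤ t}`. -/
def specFn (m : ℕ) (lam : ℕ → ℝ) (t : ℝ) : ℕ :=
  ((Finset.Icc 1 m).filter fun j => lam j ≤ t).card

/-- `F̄` is a regularized majorant of the spectral function `F`: nondecreasing,
`F ≤ F̄`, `t ↦ F̄(t)/t` nonincreasing, `∫_t^∞ F̄(s)s⁻² ds ≤ γ⁻¹ F̄(t)/t`, and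
`F̄(t) = m` for `t ≥ λ_m`. -/
structure IsSpectralMajorant (m : ℕ) (γ : ℝ) (lam : ℕ → ℝ) (Fbar : ℝ → ℝ) : Prop where
  pos : ∀ t : ℝ, 0 < t → 0 < Fbar t
  mono : ∀ s t : ℝ, 0 < s → s ≤ t → Fbar s ≤ Fbar t
  majorant : ∀ t : ℝ, 0 < t → (specFn m lam t : ℝ) ≤ Fbar t
  ratio_anti : ∀ s t : ℝ, 0 < s → s ≤ t → Fbar t / t ≤ Fbar s / s
  integral : ∀ t : ℝ, 0 < t → (∫ s in Set.Ioi t, Fbar s / s ^ 2) ≤ γ⁻¹ * Fbar t / t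
  top : ∀ t : ℝ, lam m ≤ t → Fbar t = m

/-- The quantity `t_{n,m} = t + 3 log(2 log₂ n + ½ log₂(λ_m/λ̃) + 2)`. -/
def tnm (n m : ℕ) (t lamTilde : ℝ) (lam : ℕ → ℝ) : ℝ :=
  t + 3 * Real.log (2 * Real.logb 2 n + (1 / 2) * Real.logb 2 (lam m / lamTilde) + 2)

/-- `(μ, ψ)` is a spectral representation `S = ∑ᵢ μᵢ (ψᵢ ⊗ ψᵢ)` of the symmetric
kernel `S`, with `ψ₁,…,ψ_m` orthonormal. -/
def SpectralRep (m : ℕ) (S : Matrix (Fin m) (Fin m) ℝ) (μ : ℕ → ℝ)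
    (ψ : ℕ → Fin m → ℝ) : Prop :=
  OrthonormalFamily m ψ ∧
    S = Matrix.of fun u v => ∑ i ∈ Finset.Icc 1 m, μ i * ψ i u * ψ i v

/-- `‖P_L x‖²` for `L = supp(S) = l.s.{ψᵢ : μᵢ ≠ 0}`, computed from the spectral data. -/
def projNormSqData {m : ℕ} (μ : ℕ → ℝ) (ψ : ℕ → Fin m → ℝ) (x : Fin m → ℝ) : ℝ :=
  ∑ i ∈ (Finset.Icc 1 m).filter fun i => μ i ≠ 0, (∑ v, x v * ψ i v) ^ 2

/-- The coherence function `φ(S;t) := ∑_{λ_j ≤ t} ‖P_L φ_j‖²`, from the spectral data. -/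
def cohFnData {m : ℕ} (lam : ℕ → ℝ) (φ : ℕ → Fin m → ℝ) (μ : ℕ → ℝ)
    (ψ : ℕ → Fin m → ℝ) (t : ℝ) : ℝ :=
  ∑ j ∈ (Finset.Icc 1 m).filter fun j => lam j ≤ t, projNormSqData μ ψ (φ j)

/-- Membership of `φfun` in the class `Ψ_{S,W}`: `φfun` is nonnegative and nondecreasing
on `(0,∞)`, dominates the coherence function `φ(S;·)`, and `φfun/F̄` is nonincreasing. -/
def MemPsi {m : ℕ} (lam : ℕ → ℝ) (φ : ℕ → Fin m → ℝ) (Fbar : ℝ → ℝ) (μ : ℕ → ℝ)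
    (ψ : ℕ → Fin m → ℝ) (φfun : ℝ → ℝ) : Prop :=
  (∀ t : ℝ, 0 < t → 0 ≤ φfun t) ∧
  (∀ s t : ℝ, 0 < s → s ≤ t → φfun s ≤ φfun t) ∧
  (∀ t : ℝ, 0 < t → cohFnData lam φ μ ψ t ≤ φfun t) ∧
  (∀ s t : ℝ, 0 < s → s ≤ t → φfun t / Fbar t ≤ φfun s / Fbar s)

/-- The Hilbert–Schmidt inner product of two kernels. -/
def hsInner {m : ℕ} (A B : Matrix (Fin m) (Fin m) ℝ) : ℝ := ∑ u, ∑ v, A u v * B u v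

/-- `sign(S) := ∑ᵢ sign(μᵢ) (ψᵢ ⊗ ψᵢ)`, from the spectral data of `S`. -/
def signMatData {m : ℕ} (μ : ℕ → ℝ) (ψ : ℕ → Fin m → ℝ) : Matrix (Fin m) (Fin m) ℝ :=
  Matrix.of fun u v => ∑ i ∈ Finset.Icc 1 m, Real.sign (μ i) * ψ i u * ψ i v

theorem spb_sum_Icc (m : ℕ) (f : ℕ → ℝ) :
    ∑ k ∈ Finset.Icc 1 m, f k = ∑ i : Fin m, f (i.val + 1) := by
  rw [Fin.sum_univ_eq_sum_range (fun i => f (i + 1)) m, Finset.range_eq_Ico,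
    Finset.sum_Ico_add' f 0 m 1]
  rfl

theorem spb_complete (m : ℕ) (φ : ℕ → Fin m → ℝ) (h : OrthonormalFamily m φ) (u v : Fin m) :
    ∑ j ∈ Finset.Icc 1 m, φ j u * φ j v = if u = v then (1 : ℝ) else 0 := by
  rw [spb_sum_Icc]
  let U : Matrix (Fin m) (Fin m) ℝ := Matrix.of fun i v => φ (i.val + 1) v
  have h1 : U * U.transpose = 1 := by
    ext i j
    have := h (i.val + 1) (by simp) (j.val + 1) (by simp)
    simp only [Matrix.mul_apply, Matrix.transpose_apply, U, Matrix.of_apply, Matrix.one_apply]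
    rw [this]
    simp [Fin.ext_iff]
  have h2 : U.transpose * U = 1 := mul_eq_one_comm.mp h1
  have h3 := congrFun (congrFun h2 u) v
  simpa [Matrix.mul_apply, U, Matrix.one_apply] using h3

theorem spb_hsInner (m : ℕ) (φ : ℕ → Fin m → ℝ) (h : OrthonormalFamily m φ)
    (G B : Matrix (Fin m) (Fin m) ℝ) :
    hsInner G B = ∑ j ∈ Finset.Icc 1 m, ∑ u, G.mulVec (φ j) u * B.mulVec (φ j) u := by
  rw [Finset.sum_comm]
  unfold hsInner
  refine Finset.sum_congr rfl fun u _ => ?_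
  have : ∀ j, G.mulVec (φ j) u * B.mulVec (φ j) u
      = ∑ v, ∑ w, G u v * B u w * (φ j v * φ j w) := by
    intro j
    simp only [Matrix.mulVec, dotProduct, Finset.sum_mul_sum]
    refine Finset.sum_congr rfl fun v _ => Finset.sum_congr rfl fun w _ => by ring
  simp only [this]
  rw [Finset.sum_comm]
  refine Finset.sum_congr rfl fun v _ => ?_
  rw [Finset.sum_comm]
  simp only [← Finset.mul_sum, spb_complete m φ h]
  simp

theorem spb_sign_norm (m : ℕ) (μ : ℕ → ℝ) (ψ : ℕ → Fin m → ℝ) (h : OrthonormalFamily m ψ)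
    (x : Fin m → ℝ) :
    ∑ u, ((signMatData μ ψ).mulVec x u) ^ 2 = projNormSqData μ ψ x := by
  have h1 : ∀ u, (signMatData μ ψ).mulVec x u
      = ∑ i ∈ Finset.Icc 1 m, Real.sign (μ i) * (∑ v, x v * ψ i v) * ψ i u := by
    intro u
    simp only [Matrix.mulVec, dotProduct, signMatData, Matrix.of_apply, Finset.sum_mul,
      Finset.mul_sum]
    rw [Finset.sum_comm]
    refine Finset.sum_congr rfl fun v _ => Finset.sum_congr rfl fun w _ => by ring
  simp only [h1, sq (Finset.sum _ _), Finset.sum_mul_sum]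
  rw [Finset.sum_comm]
  unfold projNormSqData
  rw [Finset.sum_filter]
  refine Finset.sum_congr rfl fun i hi => ?_
  rw [Finset.sum_comm]
  set a : ℕ → ℝ := fun i => ∑ v, x v * ψ i v with ha
  have h2 : ∀ j ∈ Finset.Icc 1 m,
      ∑ u, Real.sign (μ i) * a i * ψ i u * (Real.sign (μ j) * a j * ψ j u)
      = if i = j then Real.sign (μ i) * a i * (Real.sign (μ j) * a j) else 0 := by
    intro j hj
    have : ∀ u, Real.sign (μ i) * a i * ψ i u * (Real.sign (μ j) * a j * ψ j u)
      = Real.sign (μ i) * a i * (Real.sign (μ j) * a j) * (ψ i u * ψ j u) := fun u => by ring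
    simp only [this, ← Finset.mul_sum, h i hi j hj]
    simp
  rw [Finset.sum_congr rfl h2, Finset.sum_ite_eq, if_pos hi]
  rcases lt_trichotomy (μ i) 0 with h0 | h0 | h0
  · simp [Real.sign_of_neg h0, h0.ne, sq, a]
  · simp [h0]
  · simp [Real.sign_of_pos h0, h0.ne', sq, a]

theorem spb_int_inv_sq (a : ℝ) (ha : 0 < a) :
    IntegrableOn (fun s : ℝ => (s ^ 2)⁻¹) (Set.Ioi a) ∧ ∫ s in Set.Ioi a, (s ^ 2)⁻¹ = a⁻¹ := by
  have e : Set.EqOn (fun s : ℝ => s ^ (-2 : ℝ)) (fun s : ℝ => (s ^ 2)⁻¹) (Set.Ioi a) := by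
    intro s hs
    have : 0 < s := ha.trans hs
    simp only
    rw [Real.rpow_neg this.le]
    norm_num
  constructor
  · exact (integrableOn_Ioi_rpow_of_lt (by norm_num : (-2 : ℝ) < -1) ha).congr_fun e
      measurableSet_Ioi
  · rw [← setIntegral_congr_fun measurableSet_Ioi e,
      integral_Ioi_rpow_of_lt (by norm_num : (-2 : ℝ) < -1) ha]
    norm_num
    rw [Real.rpow_neg_one]

theorem spb_tail (m : ℕ) (γ : ℝ) (lam : ℕ → ℝ) (Fbar φfun : ℝ → ℝ) (p : ℕ → ℝ)
    (hm : 1 ≤ m) (hp : ∀ j, 0 ≤ p j)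
    (hF : IsSpectralMajorant m γ lam Fbar)
    (hcoh : ∀ t : ℝ, 0 < t →
      ∑ j ∈ (Finset.Icc 1 m).filter (fun j => lam j ≤ t), p j ≤ φfun t)
    (hanti : ∀ s t : ℝ, 0 < s → s ≤ t → φfun t / Fbar t ≤ φfun s / Fbar s)
    (h0 : ∀ t : ℝ, 0 < t → 0 ≤ φfun t)
    (t : ℝ) (ht : 0 < t) :
    ∑ j ∈ (Finset.Icc 1 m).filter (fun j => ¬ lam j ≤ t), p j / lam j ≤ γ⁻¹ * (φfun t / t) := by
  have hFt := hF.pos t ht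
  set K := φfun t / Fbar t with hK
  have hK0 : 0 ≤ K := div_nonneg (h0 t ht) hFt.le
  have hb : ∀ s, 0 < s → Fbar s ≤ m := by
    intro s hs
    rw [← hF.top (max s (lam m)) (le_max_right _ _)]
    exact hF.mono _ _ hs (le_max_left _ _)
  have hFint : IntegrableOn (fun s => Fbar s / s ^ 2) (Set.Ioi t) := by
    have hmon : MonotoneOn Fbar (Set.Ioi t) := fun x hx y hy hxy =>
      hF.mono x y (ht.trans hx) hxy
    have hmeas : AEMeasurable Fbar (volume.restrict (Set.Ioi t)) :=
      aemeasurable_restrict_of_monotoneOn measurableSet_Ioi hmon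
    refine Integrable.mono' ((spb_int_inv_sq t ht).1.const_mul (m : ℝ)) ?_ ?_
    · exact (hmeas.div (by fun_prop)).aestronglyMeasurable
    · filter_upwards [ae_restrict_mem measurableSet_Ioi] with s hs
      have hs0 : 0 < s := ht.trans hs
      rw [Real.norm_of_nonneg (by have := hF.pos s hs0; positivity), div_eq_mul_inv]
      exact mul_le_mul_of_nonneg_right (hb s hs0) (by positivity)
  have key : ∀ j ∈ (Finset.Icc 1 m).filter (fun j => ¬ lam j ≤ t),
      IntegrableOn ((Set.Ioi (lam j)).indicator fun s : ℝ => p j * (s ^ 2)⁻¹) (Set.Ioi t) ∧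
      ∫ s in Set.Ioi t, (Set.Ioi (lam j)).indicator (fun s : ℝ => p j * (s ^ 2)⁻¹) s
        = p j / lam j := by
    intro j hj
    have hj' : t < lam j := not_le.mp (Finset.mem_filter.mp hj).2
    have hlj : 0 < lam j := ht.trans hj'
    constructor
    · exact ((spb_int_inv_sq t ht).1.const_mul (p j)).indicator measurableSet_Ioi
    · rw [setIntegral_indicator measurableSet_Ioi,
        Set.inter_eq_right.mpr (Set.Ioi_subset_Ioi hj'.le), integral_const_mul,
        (spb_int_inv_sq _ hlj).2, div_eq_mul_inv]
  calc ∑ j ∈ (Finset.Icc 1 m).filter (fun j => ¬ lam j ≤ t), p j / lam j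
      = ∫ s in Set.Ioi t, ∑ j ∈ (Finset.Icc 1 m).filter (fun j => ¬ lam j ≤ t),
          (Set.Ioi (lam j)).indicator (fun s : ℝ => p j * (s ^ 2)⁻¹) s := by
        rw [integral_finset_sum _ fun j hj => (key j hj).1]
        exact Finset.sum_congr rfl fun j hj => (key j hj).2.symm
    _ ≤ ∫ s in Set.Ioi t, K * (Fbar s / s ^ 2) := by
        refine setIntegral_mono_on (integrable_finset_sum _ fun j hj => (key j hj).1)
          (hFint.const_mul K) measurableSet_Ioi ?_
        intro s hs
        have hs0 : 0 < s := ht.trans hs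
        have hFs := hF.pos s hs0
        have h1 : φfun s ≤ K * Fbar s := by
          have := hanti t s ht (le_of_lt hs)
          rwa [div_le_iff₀ hFs] at this
        have h2 : ∑ j ∈ (Finset.Icc 1 m).filter (fun j => ¬ lam j ≤ t),
            (Set.Ioi (lam j)).indicator (fun s : ℝ => p j * (s ^ 2)⁻¹) s
            ≤ ∑ j ∈ (Finset.Icc 1 m).filter (fun j => lam j ≤ s), p j * (s ^ 2)⁻¹ := by
          rw [Finset.sum_filter, Finset.sum_filter]
          refine Finset.sum_le_sum fun j _ => ?_
          have hpp : 0 ≤ p j * (s ^ 2)⁻¹ := mul_nonneg (hp j) (by positivity)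
          simp only [Set.indicator_apply, Set.mem_Ioi]
          split_ifs <;> first | exact hpp | exact le_rfl | (exfalso; linarith)
        refine h2.trans ?_
        rw [← Finset.sum_mul, div_eq_mul_inv, ← mul_assoc]
        exact mul_le_mul_of_nonneg_right ((hcoh s hs0).trans h1) (by positivity)
    _ = K * ∫ s in Set.Ioi t, Fbar s / s ^ 2 := integral_const_mul _ _
    _ ≤ K * (γ⁻¹ * Fbar t / t) := mul_le_mul_of_nonneg_left (hF.integral t ht) hK0
    _ = γ⁻¹ * (φfun t / t) := by rw [hK]; field_simp

theorem spb_cs {m : ℕ} (s : Finset ℕ) (f g : ℕ → Fin m → ℝ) :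
    |∑ j ∈ s, ∑ u, f j u * g j u| ≤
      Real.sqrt (∑ j ∈ s, ∑ u, f j u ^ 2) * Real.sqrt (∑ j ∈ s, ∑ u, g j u ^ 2) := by
  rw [← Real.sqrt_mul (Finset.sum_nonneg fun j _ => Finset.sum_nonneg fun u _ => sq_nonneg _)]
  apply Real.abs_le_sqrt
  simp only [← Finset.sum_product']
  exact Finset.sum_mul_sq_le_sq_mul_sq _ _ _

theorem spb_msqrt (m : ℕ) (hm : 1 ≤ m) (x : ℝ) : (m : ℝ) * Real.sqrt (x / (m : ℝ) ^ 2) = Real.sqrt x := by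
  have : (0 : ℝ) < m := by exact_mod_cast hm
  rw [Real.sqrt_div' _ (by positivity), Real.sqrt_sq this.le]
  field_simp

/-- **Coherence bound on the pairing with the sign matrix.** -/
theorem sign_pairing_bound (c γ : ℝ) (hc : 1 ≤ c) (hγ0 : 0 < γ) (hγ1 : γ < 1) :
    ∀ (m k0 : ℕ) (lam : ℕ → ℝ) (φ : ℕ → Fin m → ℝ) (Fbar : ℝ → ℝ)
      (S A : Matrix (Fin m) (Fin m) ℝ) (μ : ℕ → ℝ) (ψ : ℕ → Fin m → ℝ) (φfun : ℝ → ℝ),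
      1 ≤ m →
      IsEigenData m c lam φ k0 →
      IsSpectralMajorant m γ lam Fbar →
      SpectralRep m S μ ψ →
      MemPsi lam φ Fbar μ ψ φfun →
      A.IsSymm →
      ∀ t : ℝ, 0 < t →
        |hsInner (signMatData μ ψ) (A - S)| ≤
          (m : ℝ) * Real.sqrt (φfun t) * Real.sqrt (l2PiSq (A - S)) +
            (m : ℝ) * Real.sqrt ((c + γ) / γ * (φfun t / t)) *
              Real.sqrt (sobolevHSSq lam φ (A - S) / (m : ℝ) ^ 2) := by
  intro m k0 lam φ Fbar S A μ ψ φfun hm hE hF hS hΨ _ t ht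
  obtain ⟨hΨ0, hΨm, hΨc, hΨa⟩ := hΨ
  set B := A - S with hB
  set G := signMatData μ ψ with hG
  have hφt := hΨ0 t ht
  have hR : (m : ℝ) * Real.sqrt (φfun t) * Real.sqrt (l2PiSq B) +
            (m : ℝ) * Real.sqrt ((c + γ) / γ * (φfun t / t)) *
              Real.sqrt (sobolevHSSq lam φ B / (m : ℝ) ^ 2)
      = Real.sqrt (φfun t) * Real.sqrt (hsNormSq B) +
        Real.sqrt ((c + γ) / γ * (φfun t / t)) * Real.sqrt (sobolevHSSq lam φ B) := by
    rw [← spb_msqrt m hm (hsNormSq B), ← spb_msqrt m hm (sobolevHSSq lam φ B)]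
    unfold l2PiSq
    ring
  rw [hR, spb_hsInner m φ hE.orth,
    ← Finset.sum_filter_add_sum_filter_not (Finset.Icc 1 m) (fun j => lam j ≤ t)]
  refine (abs_add_le _ _).trans (add_le_add ?_ ?_)
  · refine (spb_cs _ _ _).trans (mul_le_mul (Real.sqrt_le_sqrt ?_) (Real.sqrt_le_sqrt ?_)
      (Real.sqrt_nonneg _) (Real.sqrt_nonneg _))
    · simp only [hG, spb_sign_norm m μ ψ hS.1]
      exact hΨc t ht
    · have : hsNormSq B = hsInner B B := by simp [hsNormSq, hsInner, sq]
      rw [this, spb_hsInner m φ hE.orth]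
      simp only [← sq]
      exact Finset.sum_le_sum_of_subset_of_nonneg (Finset.filter_subset _ _)
        fun j _ _ => Finset.sum_nonneg fun u _ => sq_nonneg _
  · have e : ∀ j ∈ (Finset.Icc 1 m).filter (fun j => ¬ lam j ≤ t),
        ∑ u, G.mulVec (φ j) u * B.mulVec (φ j) u =
        ∑ u, (G.mulVec (φ j) u / Real.sqrt (lam j)) * (Real.sqrt (lam j) * B.mulVec (φ j) u) := by
      intro j hj
      have hlj : 0 < lam j := ht.trans (not_le.mp (Finset.mem_filter.mp hj).2)
      have := Real.sqrt_pos.mpr hlj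
      refine Finset.sum_congr rfl fun u _ => ?_
      field_simp
    rw [Finset.sum_congr rfl e]
    refine (spb_cs _ _ _).trans (mul_le_mul (Real.sqrt_le_sqrt ?_) (Real.sqrt_le_sqrt ?_)
      (Real.sqrt_nonneg _) (Real.sqrt_nonneg _))
    · have h1 : ∑ j ∈ (Finset.Icc 1 m).filter (fun j => ¬ lam j ≤ t),
          ∑ u, (G.mulVec (φ j) u / Real.sqrt (lam j)) ^ 2 =
          ∑ j ∈ (Finset.Icc 1 m).filter (fun j => ¬ lam j ≤ t),
            projNormSqData μ ψ (φ j) / lam j := by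
        refine Finset.sum_congr rfl fun j hj => ?_
        have hlj : 0 < lam j := ht.trans (not_le.mp (Finset.mem_filter.mp hj).2)
        simp only [div_pow, Real.sq_sqrt hlj.le]
        rw [← Finset.sum_div, hG, spb_sign_norm m μ ψ hS.1]
      rw [h1]
      refine (spb_tail m γ lam Fbar φfun (fun j => projNormSqData μ ψ (φ j)) hm
        (fun j => Finset.sum_nonneg fun _ _ => sq_nonneg _) hF hΨc hΨa hΨ0 t ht).trans ?_
      refine mul_le_mul_of_nonneg_right ?_ (by positivity)
      rw [inv_eq_one_div]
      exact div_le_div_of_nonneg_right (by linarith) hγ0.le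
    · unfold sobolevHSSq
      have h1 : ∑ j ∈ (Finset.Icc 1 m).filter (fun j => ¬ lam j ≤ t),
          ∑ u, (Real.sqrt (lam j) * B.mulVec (φ j) u) ^ 2 =
          ∑ j ∈ (Finset.Icc 1 m).filter (fun j => ¬ lam j ≤ t),
            lam j * ∑ u, (B.mulVec (φ j) u) ^ 2 := by
        refine Finset.sum_congr rfl fun j hj => ?_
        have hlj : 0 < lam j := ht.trans (not_le.mp (Finset.mem_filter.mp hj).2)
        simp only [mul_pow, Real.sq_sqrt hlj.le]
        rw [← Finset.mul_sum]
      rw [h1]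
      exact Finset.sum_le_sum_of_subset_of_nonneg (Finset.filter_subset _ _)
        fun j hj _ => mul_nonneg (hE.nonneg j hj) (Finset.sum_nonneg fun u _ => sq_nonneg _)

end
end

section
/- Truncated inverse-eigenvalue sums: Let c_γ := (c+γ)/γ. For every S ∈ 𝒮_V with support L, every φ ∈ Ψ_{S,W} and every δ > 0: (i) ∑_{k=1}^m min(λ_k⁻¹, δ²)·‖P_L φ_k‖² ≤ (c_γ + 1)·δ²·φ(δ⁻²), and (ii) ∑_{k=1}^m min(λ_k⁻¹, δ²) ≤ (c_γ + 1)·δ²·F̄(δ⁻²), where λ_k⁻¹ := +∞ when λ_k = 0 (so min(λ_k⁻¹, δ²) = δ² in that case). -/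
open MeasureTheory Finset
open scoped ENNReal NNReal

noncomputable section

/-- `min(λ_k⁻¹, δ²)`, with the convention `λ_k⁻¹ = +∞` (so the minimum is `δ²`)
when `λ_k = 0`. -/
def minInvSq (lam : ℕ → ℝ) (k : ℕ) (δ : ℝ) : ℝ :=
  if lam k = 0 then δ ^ 2 else min (lam k)⁻¹ (δ ^ 2)

theorem aux_integral_sq {a : ℝ} (ha : 0 < a) :
    IntegrableOn (fun s : ℝ => (s ^ 2)⁻¹) (Set.Ioi a) ∧
      (∫ s in Set.Ioi a, (s ^ 2)⁻¹) = a⁻¹ := by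
  have h1 : IntegrableOn (fun s : ℝ => s ^ (-2 : ℝ)) (Set.Ioi a) :=
    integrableOn_Ioi_rpow_of_lt (by norm_num) ha
  have h2 := integral_Ioi_rpow_of_lt (a := -2) (by norm_num) ha
  have e : Set.EqOn (fun s : ℝ => s ^ (-2 : ℝ)) (fun s : ℝ => (s ^ 2)⁻¹) (Set.Ioi a) := by
    intro s hs
    have hs0 : 0 < s := lt_trans ha hs
    simp only
    rw [Real.rpow_neg hs0.le]
    norm_num
  refine ⟨h1.congr_fun e measurableSet_Ioi, ?_⟩
  rw [← setIntegral_congr_fun measurableSet_Ioi e, h2]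
  have : (-2 + 1 : ℝ) = -1 := by norm_num
  rw [this, Real.rpow_neg_one]
  ring

theorem aux_sum (c γ : ℝ) (hc : 1 ≤ c) (hγ0 : 0 < γ) (m : ℕ) (lam : ℕ → ℝ) (Fbar : ℝ → ℝ)
    (hF : IsSpectralMajorant m γ lam Fbar) (w : ℕ → ℝ) (hw : ∀ k, 0 ≤ w k) (G : ℝ → ℝ)
    (hG0 : ∀ t, 0 < t → 0 ≤ G t)
    (hG : ∀ t, 0 < t → ∑ k ∈ (Finset.Icc 1 m).filter (fun k => lam k ≤ t), w k ≤ G t)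
    (hGF : ∀ s t : ℝ, 0 < s → s ≤ t → G t / Fbar t ≤ G s / Fbar s)
    (δ : ℝ) (hδ : 0 < δ) :
    (∑ k ∈ Finset.Icc 1 m, minInvSq lam k δ * w k) ≤
      ((c + γ) / γ + 1) * δ ^ 2 * G ((δ ^ 2)⁻¹) := by
  have hd2 : 0 < δ ^ 2 := by positivity
  obtain ⟨T, hT⟩ : ∃ T, T = (δ ^ 2)⁻¹ := ⟨_, rfl⟩
  have hTpos : 0 < T := by rw [hT]; positivity
  have hTi : δ ^ 2 = T⁻¹ := by rw [hT, inv_inv]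
  rw [← hT, hTi]
  rw [← Finset.sum_filter_add_sum_filter_not (Finset.Icc 1 m) (fun k => lam k ≤ T)]
  have hA : ∑ k ∈ (Finset.Icc 1 m).filter (fun k => lam k ≤ T), minInvSq lam k δ * w k
      ≤ T⁻¹ * G T := by
    refine le_trans ?_ (mul_le_mul_of_nonneg_left (hG T hTpos) (inv_pos.2 hTpos).le)
    rw [Finset.mul_sum]
    refine Finset.sum_le_sum fun k _ => mul_le_mul_of_nonneg_right ?_ (hw k)
    unfold minInvSq
    rw [hTi]
    split_ifs
    · exact le_rfl
    · exact min_le_right _ _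
  set K := (Finset.Icc 1 m).filter (fun k => ¬ lam k ≤ T) with hK
  have hKl : ∀ k ∈ K, T < lam k := fun k hk => not_le.1 (Finset.mem_filter.1 hk).2
  have hB1 : ∑ k ∈ K, minInvSq lam k δ * w k ≤ ∑ k ∈ K, (lam k)⁻¹ * w k := by
    refine Finset.sum_le_sum fun k hk => mul_le_mul_of_nonneg_right ?_ (hw k)
    have := hKl k hk
    unfold minInvSq
    rw [if_neg (by linarith)]
    exact min_le_left _ _
  have hint : ∀ k ∈ K, Integrable
      (fun s => (Set.Ioi (lam k)).indicator (fun s : ℝ => (s ^ 2)⁻¹) s * w k)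
      (volume.restrict (Set.Ioi T)) := by
    intro k _
    exact ((aux_integral_sq hTpos).1.indicator measurableSet_Ioi).mul_const _
  have hB2 : ∑ k ∈ K, (lam k)⁻¹ * w k = ∫ s in Set.Ioi T, ∑ k ∈ K,
      (Set.Ioi (lam k)).indicator (fun s : ℝ => (s ^ 2)⁻¹) s * w k := by
    rw [integral_finsetSum _ hint]
    refine Finset.sum_congr rfl fun k hk => ?_
    rw [integral_mul_const, setIntegral_indicator measurableSet_Ioi, Set.Ioi_inter_Ioi,
      max_eq_right (hKl k hk).le, (aux_integral_sq (hTpos.trans (hKl k hk))).2]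
  have hFm : ∀ s, 0 < s → Fbar s ≤ m := fun s hs => by
    rw [← hF.top (max s (lam m)) (le_max_right _ _)]
    exact hF.mono _ _ hs (le_max_left _ _)
  have hFint : IntegrableOn (fun s => Fbar s / s ^ 2) (Set.Ioi T) := by
    have hmeas : AEMeasurable Fbar (volume.restrict (Set.Ioi T)) :=
      aemeasurable_restrict_of_monotoneOn measurableSet_Ioi
        (fun a ha b _ hab => hF.mono a b (hTpos.trans ha) hab)
    refine Integrable.mono' ((aux_integral_sq hTpos).1.const_mul (m : ℝ)) ?_ ?_
    · exact (hmeas.div (measurable_id.pow_const 2).aemeasurable).aestronglyMeasurable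
    · refine (ae_restrict_iff' measurableSet_Ioi).2 (Filter.Eventually.of_forall ?_)
      intro s hs
      have hs0 : 0 < s := hTpos.trans hs
      have := hF.pos s hs0
      rw [Real.norm_of_nonneg (by positivity), div_eq_mul_inv]
      exact mul_le_mul_of_nonneg_right (hFm s hs0) (by positivity)
  have hB3 : (∫ s in Set.Ioi T, ∑ k ∈ K,
      (Set.Ioi (lam k)).indicator (fun s : ℝ => (s ^ 2)⁻¹) s * w k) ≤
      ∫ s in Set.Ioi T, (G T / Fbar T) * (Fbar s / s ^ 2) := by
    refine setIntegral_mono_on (integrable_finsetSum _ hint) (hFint.const_mul _)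
      measurableSet_Ioi ?_
    intro s hs
    have hs0 : 0 < s := hTpos.trans hs
    have hGs : G s ≤ G T / Fbar T * Fbar s :=
      (div_le_iff₀ (hF.pos s hs0)).1 (hGF T s hTpos (le_of_lt hs))
    have h1 : ∑ k ∈ K, (Set.Ioi (lam k)).indicator (fun s : ℝ => (s ^ 2)⁻¹) s * w k ≤
        (s ^ 2)⁻¹ * ∑ k ∈ (Finset.Icc 1 m).filter (fun k => lam k ≤ s), w k := by
      rw [Finset.mul_sum, Finset.sum_filter (fun k => lam k ≤ s)]
      refine le_trans (Finset.sum_le_sum (g := fun k => if lam k ≤ s then (s ^ 2)⁻¹ * w k else 0)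
        fun k _ => ?_) (Finset.sum_le_sum_of_subset_of_nonneg (Finset.filter_subset _ _) ?_)
      · have := hw k
        by_cases h : lam k < s
        · rw [Set.indicator_of_mem (by exact h), if_pos h.le]
        · rw [Set.indicator_of_notMem (by exact h), zero_mul]
          split_ifs <;> positivity
      · intro k _ _
        have := hw k
        split_ifs <;> positivity
    have hi : 0 ≤ (s ^ 2)⁻¹ := by positivity
    calc _ ≤ _ := h1
      _ ≤ (s ^ 2)⁻¹ * (G T / Fbar T * Fbar s) :=
        mul_le_mul_of_nonneg_left ((hG s hs0).trans hGs) hi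
      _ = _ := by ring
  have hFT := hF.pos T hTpos
  have hGT := hG0 T hTpos
  have hB4 : (∫ s in Set.Ioi T, (G T / Fbar T) * (Fbar s / s ^ 2)) ≤ γ⁻¹ * (T⁻¹ * G T) := by
    rw [integral_const_mul]
    refine (mul_le_mul_of_nonneg_left (hF.integral T hTpos) (by positivity)).trans_eq ?_
    field_simp
  have hX : 0 ≤ T⁻¹ * G T := by positivity
  have hc2 : 1 + γ⁻¹ ≤ (c + γ) / γ + 1 := by
    have : γ⁻¹ ≤ (c + γ) / γ := by
      rw [inv_eq_one_div]
      exact div_le_div_of_nonneg_right (by linarith) hγ0.le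
    linarith
  have := mul_le_mul_of_nonneg_right hc2 hX
  rw [mul_assoc]
  linarith

/-- **Truncated inverse-eigenvalue sums.** -/
theorem truncated_inverse_eigenvalue_sums (c γ : ℝ) (hc : 1 ≤ c) (hγ0 : 0 < γ)
    (hγ1 : γ < 1) :
    ∀ (m k0 : ℕ) (lam : ℕ → ℝ) (φ : ℕ → Fin m → ℝ) (Fbar : ℝ → ℝ)
      (S : Matrix (Fin m) (Fin m) ℝ) (μ : ℕ → ℝ) (ψ : ℕ → Fin m → ℝ) (φfun : ℝ → ℝ),
      1 ≤ m →
      IsEigenData m c lam φ k0 →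
      IsSpectralMajorant m γ lam Fbar →
      SpectralRep m S μ ψ →
      MemPsi lam φ Fbar μ ψ φfun →
      ∀ δ : ℝ, 0 < δ →
        (∑ k ∈ Finset.Icc 1 m, minInvSq lam k δ * projNormSqData μ ψ (φ k)) ≤
          ((c + γ) / γ + 1) * δ ^ 2 * φfun ((δ ^ 2)⁻¹) ∧
        (∑ k ∈ Finset.Icc 1 m, minInvSq lam k δ) ≤
          ((c + γ) / γ + 1) * δ ^ 2 * Fbar ((δ ^ 2)⁻¹) := by
  intro m k0 lam φ Fbar S μ ψ φfun hm hE hF hS hP δ hδ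
  obtain ⟨h0, _, h2, h3⟩ := hP
  refine ⟨aux_sum c γ hc hγ0 m lam Fbar hF (fun k => projNormSqData μ ψ (φ k))
    (fun k => Finset.sum_nonneg fun i _ => sq_nonneg _) φfun h0 h2 h3 δ hδ, ?_⟩
  have := aux_sum c γ hc hγ0 m lam Fbar hF (fun _ => 1) (fun _ => zero_le_one) Fbar
    (fun t ht => (hF.pos t ht).le) (fun t ht => by simpa [specFn] using hF.majorant t ht)
    (fun s t hs hst => by
      rw [div_self (hF.pos s hs).ne', div_self (hF.pos t (hs.trans_le hst)).ne']) δ hδ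
  simpa using this

end
end
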